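/- Let n ≥ 3 and let c_S > 0 be a constant such that the Sobolev inequality c_S·(∫_{ℝⁿ} |φ|^{2n/(n-2)} dx)^{(n-2)/n} ≤ ∫_{ℝⁿ} |∇φ|² dx holds for every smooth compactly supported function φ on ℝⁿ. Let f : ℝⁿ → ℝ be a continuous function whose negative part f₋ = max(-f, 0) satisfies (∫_{ℝⁿ} |f₋|^{n/2} dx)^{2/n} ≤ c_S/2. Then every smooth, compactly supported function ζ : ℝⁿ → ℝ satisfying Δζ - f·ζ = 0 on ℝⁿ is identically zero. -/

import Mathlib

open MeasureTheory
open scoped BigOperators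

/-- The Euclidean Laplacian `Δu = ∑ i, ∂²u/∂xᵢ²` of a function on `ℝⁿ`. -/
noncomputable def euclideanLaplacian {n : ℕ} (u : EuclideanSpace ℝ (Fin n) → ℝ)
    (x : EuclideanSpace ℝ (Fin n)) : ℝ :=
  ∑ i : Fin n,
    fderiv ℝ (fun y => fderiv ℝ u y (EuclideanSpace.single i 1)) x
      (EuclideanSpace.single i 1)

/-!
The weight `exp ⟪v, x⟫` conjugates `Δ` into `Δ - 2∂ᵥ + ‖v‖²`. Let `w = exp ⟪v, x⟫ • u` with `u`
compactly supported. Integration by parts shows that `∂ᵥw` is `L²`-orthogonal to `Δw` and to `w`, so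
pairing the conjugated Laplacian of `w` with `∂ᵥw` leaves only `-2‖∂ᵥw‖²`; hence its `L²` norm is at
least `2‖∂ᵥw‖`. If `|⟪v, x⟫| ≤ d` on the support, the Poincaré inequality `‖v‖²‖w‖ ≤ 2d‖∂ᵥw‖` turns
this into the Carleman estimate `‖v‖² ‖exp ⟪v, x⟫ • u‖ ≤ d ‖exp ⟪v, x⟫ • Δu‖`. For a support inside
the ball of radius `R` about the origin one may take `d = ‖v‖R`, so the estimate improves as `‖v‖`
grows. This is incompatible with `|Δu| ≤ M|u|` for large `‖v‖` unless `u = 0`, and a solution of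
`Δζ = fζ` satisfies such a bound because `f` is bounded on the compact support of `ζ`.
-/

open Laplacian InnerProductSpace
open scoped RealInnerProductSpace

namespace CarlemanEstimate

section SquareIntegrable

variable {X F : Type*} [MeasurableSpace X] {μ : Measure X}
  [NormedAddCommGroup F] [InnerProductSpace ℝ F]

lemma integral_norm_sq_le_of_le_abs_integral_inner {a b : X → F} (ha : MemLp a 2 μ)
    (hb : MemLp b 2 μ) (hab : ∫ x, ‖a x‖ ^ 2 ∂μ ≤ |∫ x, ⟪a x, b x⟫ ∂μ|) :
    ∫ x, ‖a x‖ ^ 2 ∂μ ≤ ∫ x, ‖b x‖ ^ 2 ∂μ := by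
  have ha_sq : Integrable (fun x => ‖a x‖ ^ 2) μ := ha.norm.integrable_sq
  have hb_sq : Integrable (fun x => ‖b x‖ ^ 2) μ := hb.norm.integrable_sq
  have hamgm : ∀ x, ‖⟪a x, b x⟫‖ ≤ (‖a x‖ ^ 2 + ‖b x‖ ^ 2) / 2 := fun x => by
    linarith [norm_inner_le_norm (𝕜 := ℝ) (a x) (b x), two_mul_le_add_sq ‖a x‖ ‖b x‖]
  have hmean : |∫ x, ⟪a x, b x⟫ ∂μ| ≤ ∫ x, (‖a x‖ ^ 2 + ‖b x‖ ^ 2) / 2 ∂μ :=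
    norm_integral_le_of_norm_le ((ha_sq.add hb_sq).div_const 2) (.of_forall hamgm)
  rw [integral_div, integral_add ha_sq hb_sq] at hmean
  linarith

lemma integrable_inner_of_hasCompactSupport_right [TopologicalSpace X] [OpensMeasurableSpace X]
    [IsFiniteMeasureOnCompacts μ] {g w : X → F} (hg : Continuous g) (hw : Continuous w)
    (hws : HasCompactSupport w) : Integrable (fun x => ⟪g x, w x⟫) μ :=
  (hg.inner hw).integrable_of_hasCompactSupport <|
    hws.mono fun x hx hwx => hx (by simp only [hwx, inner_zero_right])

end SquareIntegrable

section DirectionalDerivative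

variable {E F : Type*} [NormedAddCommGroup E] [NormedSpace ℝ E]
  [NormedAddCommGroup F] [NormedSpace ℝ F] {u : E → F}

/-- The derivative `∂ᵥu` of `u` in the direction `v`, as a function on the whole space, so that it
can be iterated. -/
noncomputable def dirDeriv (v : E) (u : E → F) (x : E) : F := fderiv ℝ u x v

lemma contDiff_one_dirDeriv (hu : ContDiff ℝ 2 u) (v : E) : ContDiff ℝ 1 (dirDeriv v u) :=
  (hu.fderiv_right one_add_one_eq_two.le).clm_apply contDiff_const

lemma continuous_dirDeriv (hu : ContDiff ℝ 1 u) (v : E) : Continuous (dirDeriv v u) :=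
  (hu.continuous_fderiv one_ne_zero).clm_apply continuous_const

lemma hasCompactSupport_dirDeriv (hu : HasCompactSupport u) (v : E) :
    HasCompactSupport (dirDeriv v u) :=
  hu.fderiv_apply ℝ v

lemma dirDeriv_dirDeriv (hu : ContDiff ℝ 2 u) (v e : E) (x : E) :
    dirDeriv v (dirDeriv e u) x = fderiv ℝ (fderiv ℝ u) x v e := by
  have hdiff : Differentiable ℝ (fderiv ℝ u) :=
    (hu.fderiv_right one_add_one_eq_two.le).differentiable one_ne_zero
  change fderiv ℝ (fun y => fderiv ℝ u y e) x v = _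
  rw [fderiv_clm_apply (hdiff x) (differentiableAt_const e)]
  simp

lemma dirDeriv_comm (hu : ContDiff ℝ 2 u) (v e : E) :
    dirDeriv v (dirDeriv e u) = dirDeriv e (dirDeriv v u) := by
  funext x
  rw [dirDeriv_dirDeriv hu, dirDeriv_dirDeriv hu]
  exact hu.contDiffAt.isSymmSndFDerivAt (by simp) v e

lemma dirDeriv_smul {g : E → ℝ} {x : E} (hg : DifferentiableAt ℝ g x)
    (hu : DifferentiableAt ℝ u x) (v : E) :
    dirDeriv v (fun y => g y • u y) x = g x • dirDeriv v u x + dirDeriv v g x • u x := by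
  simp [dirDeriv, fderiv_fun_smul hg hu]

end DirectionalDerivative

section InnerProduct

variable {E F : Type*} [NormedAddCommGroup E] [InnerProductSpace ℝ E]
  [NormedAddCommGroup F] [NormedSpace ℝ F] {u : E → F}

lemma dirDeriv_inner (v e x : E) : dirDeriv e (fun y => ⟪v, y⟫) x = ⟪v, e⟫ := by
  change fderiv ℝ (innerSL ℝ v) x e = _
  rw [ContinuousLinearMap.fderiv, innerSL_apply_apply]

lemma dirDeriv_exp_inner_smul {x : E} (hu : DifferentiableAt ℝ u x) (v e : E) :
    dirDeriv e (fun y => Real.exp ⟪v, y⟫ • u y) x =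
      Real.exp ⟪v, x⟫ • (dirDeriv e u x + ⟪v, e⟫ • u x) := by
  have hφ : DifferentiableAt ℝ (fun y => ⟪v, y⟫) x := (innerSL ℝ v).differentiableAt
  have hexp : dirDeriv e (fun y => Real.exp ⟪v, y⟫) x = Real.exp ⟪v, x⟫ * ⟪v, e⟫ := by
    rw [← dirDeriv_inner v e x]
    simp [dirDeriv, fderiv_exp hφ]
  rw [dirDeriv_smul hφ.exp hu, hexp, smul_add, mul_smul]

lemma dirDeriv_dirDeriv_exp_inner_smul (hu : ContDiff ℝ 2 u) (v e x : E) :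
    dirDeriv e (dirDeriv e fun y => Real.exp ⟪v, y⟫ • u y) x =
      Real.exp ⟪v, x⟫ •
        (dirDeriv e (dirDeriv e u) x + (2 * ⟪v, e⟫) • dirDeriv e u x + ⟪v, e⟫ ^ 2 • u x) := by
  have hu1 : Differentiable ℝ u := hu.differentiable two_ne_zero
  have hu2 : Differentiable ℝ (dirDeriv e u) :=
    (contDiff_one_dirDeriv hu e).differentiable one_ne_zero
  have hfst : dirDeriv e (fun y => Real.exp ⟪v, y⟫ • u y) =
      fun y => Real.exp ⟪v, y⟫ • (dirDeriv e u + ⟪v, e⟫ • u) y :=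
    funext fun y => dirDeriv_exp_inner_smul (hu1 y) v e
  have hsnd : dirDeriv e (dirDeriv e u + ⟪v, e⟫ • u) x =
      dirDeriv e (dirDeriv e u) x + ⟪v, e⟫ • dirDeriv e u x := by
    rw [dirDeriv, fderiv_add (hu2 x) ((hu1 x).const_smul _), fderiv_const_smul (hu1 x)]
    rfl
  rw [hfst, dirDeriv_exp_inner_smul ((hu2 x).add ((hu1 x).const_smul _)), hsnd, Pi.add_apply,
    Pi.smul_apply]
  module

variable [FiniteDimensional ℝ E]

lemma laplacian_eq_sum_dirDeriv {ι : Type*} [Fintype ι] (b : OrthonormalBasis ι ℝ E)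
    (hu : ContDiff ℝ 2 u) (x : E) : Δ u x = ∑ i, dirDeriv (b i) (dirDeriv (b i) u) x := by
  simp [laplacian_eq_iteratedFDeriv_orthonormalBasis u b, iteratedFDeriv_two_apply,
    dirDeriv_dirDeriv hu]

lemma continuous_laplacian (hu : ContDiff ℝ 2 u) : Continuous (Δ u) := by
  simp only [funext (laplacian_eq_sum_dirDeriv (stdOrthonormalBasis ℝ E) hu)]
  exact continuous_finsetSum _ fun i _ =>
    continuous_dirDeriv (contDiff_one_dirDeriv hu _) _

lemma hasCompactSupport_laplacian (hu : HasCompactSupport u) : HasCompactSupport (Δ u) := by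
  let b := stdOrthonormalBasis ℝ E
  rw [laplacian_eq_iteratedFDeriv_orthonormalBasis u b]
  exact (hu.iteratedFDeriv (𝕜 := ℝ) 2).mono fun x hx h => hx (by simp [h])

lemma laplacian_exp_inner_smul (hu : ContDiff ℝ 2 u) (v x : E) :
    Δ (fun y => Real.exp ⟪v, y⟫ • u y) x =
      Real.exp ⟪v, x⟫ • (Δ u x + (2 : ℝ) • dirDeriv v u x + ‖v‖ ^ 2 • u x) := by
  let b := stdOrthonormalBasis ℝ E
  have hw : ContDiff ℝ 2 fun y => Real.exp ⟪v, y⟫ • u y := (innerSL ℝ v).contDiff.exp.smul hu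
  have hgrad : ∑ i, ⟪v, b i⟫ • dirDeriv (b i) u x = dirDeriv v u x := by
    nth_rw 2 [← b.sum_repr' v]
    simp [dirDeriv, real_inner_comm]
  rw [laplacian_eq_sum_dirDeriv b hw, laplacian_eq_sum_dirDeriv b hu, ← hgrad,
    ← b.sum_sq_inner_left v]
  simp only [dirDeriv_dirDeriv_exp_inner_smul hu, ← Finset.smul_sum, Finset.sum_add_distrib,
    mul_smul, Finset.sum_smul]

lemma exp_inner_smul_laplacian (hu : ContDiff ℝ 2 u) {w : E → F} {v : E}
    (hw : w = fun y => Real.exp ⟪v, y⟫ • u y) (x : E) :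
    Real.exp ⟪v, x⟫ • Δ u x = Δ w x - (2 : ℝ) • dirDeriv v w x + ‖v‖ ^ 2 • w x := by
  rw [hw, laplacian_exp_inner_smul hu,
    dirDeriv_exp_inner_smul (hu.differentiable two_ne_zero x), real_inner_self_eq_norm_sq]
  module

end InnerProduct

section IntegrationByParts

variable {E F : Type*} [NormedAddCommGroup E] [NormedSpace ℝ E] [FiniteDimensional ℝ E]
  [MeasurableSpace E] [BorelSpace E] {μ : Measure E} [μ.IsAddHaarMeasure]
  [NormedAddCommGroup F] [InnerProductSpace ℝ F] {g w : E → F}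

lemma integral_inner_dirDeriv_eq_neg (hg : ContDiff ℝ 1 g) (hw : ContDiff ℝ 1 w)
    (hws : HasCompactSupport w) (v : E) :
    ∫ x, ⟪g x, dirDeriv v w x⟫ ∂μ = -∫ x, ⟪dirDeriv v g x, w x⟫ ∂μ :=
  integral_bilinear_fderiv_right_eq_neg_left_of_integrable (B := innerSL ℝ)
    (integrable_inner_of_hasCompactSupport_right (continuous_dirDeriv hg v) hw.continuous hws)
    (integrable_inner_of_hasCompactSupport_right hg.continuous (continuous_dirDeriv hw v)
      (hasCompactSupport_dirDeriv hws v))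
    (integrable_inner_of_hasCompactSupport_right hg.continuous hw.continuous hws)
    (fun x _ => hg.differentiable one_ne_zero x) (fun x _ => hw.differentiable one_ne_zero x)

lemma integral_inner_dirDeriv_self_eq_zero (hw : ContDiff ℝ 1 w) (hws : HasCompactSupport w)
    (v : E) : ∫ x, ⟪dirDeriv v w x, w x⟫ ∂μ = 0 := by
  have hibp := integral_inner_dirDeriv_eq_neg (μ := μ) hw hw hws v
  simp only [real_inner_comm] at hibp ⊢
  linarith

lemma integral_inner_dirDeriv_dirDeriv_dirDeriv_eq_zero (hw : ContDiff ℝ 2 w)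
    (hws : HasCompactSupport w) (v e : E) :
    ∫ x, ⟪dirDeriv v w x, dirDeriv e (dirDeriv e w) x⟫ ∂μ = 0 := by
  rw [integral_inner_dirDeriv_eq_neg (contDiff_one_dirDeriv hw v) (contDiff_one_dirDeriv hw e)
    (hasCompactSupport_dirDeriv hws e), dirDeriv_comm hw,
    integral_inner_dirDeriv_self_eq_zero (contDiff_one_dirDeriv hw e)
      (hasCompactSupport_dirDeriv hws e), neg_zero]

end IntegrationByParts

section Estimates

variable {E F : Type*} [NormedAddCommGroup E] [InnerProductSpace ℝ E] [FiniteDimensional ℝ E]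
  [MeasurableSpace E] [BorelSpace E] {μ : Measure E} [μ.IsAddHaarMeasure]
  [NormedAddCommGroup F] [InnerProductSpace ℝ F] {u w : E → F} {v : E} {d : ℝ}

lemma integral_inner_dirDeriv_laplacian_eq_zero (hw : ContDiff ℝ 2 w)
    (hws : HasCompactSupport w) (v : E) : ∫ x, ⟪dirDeriv v w x, Δ w x⟫ ∂μ = 0 := by
  let b := stdOrthonormalBasis ℝ E
  simp only [laplacian_eq_sum_dirDeriv b hw, inner_sum]
  rw [integral_finsetSum]
  · exact Finset.sum_eq_zero fun i _ =>
      integral_inner_dirDeriv_dirDeriv_dirDeriv_eq_zero hw hws v (b i)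
  · exact fun i _ => integrable_inner_of_hasCompactSupport_right
      (contDiff_one_dirDeriv hw v).continuous
      (continuous_dirDeriv (contDiff_one_dirDeriv hw (b i)) (b i))
      (hasCompactSupport_dirDeriv (hasCompactSupport_dirDeriv hws (b i)) (b i))

lemma norm_sq_mul_integral_norm_sq_eq (hw : ContDiff ℝ 1 w) (hws : HasCompactSupport w) (v : E) :
    ‖v‖ ^ 2 * ∫ x, ‖w x‖ ^ 2 ∂μ = -∫ x, ⟪w x, (2 * ⟪v, x⟫) • dirDeriv v w x⟫ ∂μ := by
  have hφ : ContDiff ℝ 1 fun x => ⟪v, x⟫ := (innerSL ℝ v).contDiff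
  have hwD : Integrable (fun x => ⟪w x, ⟪v, x⟫ • dirDeriv v w x⟫) μ :=
    integrable_inner_of_hasCompactSupport_right hw.continuous
      (hφ.continuous.smul (continuous_dirDeriv hw v)) (hasCompactSupport_dirDeriv hws v).smul_left
  have hw_sq : Integrable (fun x => ‖w x‖ ^ 2) μ :=
    (hw.continuous.memLp_of_hasCompactSupport hws).norm.integrable_sq
  have hibp : ∫ x, ⟪⟪v, x⟫ • w x, dirDeriv v w x⟫ ∂μ =
      -∫ x, ⟪dirDeriv v (fun y => ⟪v, y⟫ • w y) x, w x⟫ ∂μ :=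
    integral_inner_dirDeriv_eq_neg (hφ.smul hw) hw hws v
  have hprod : ∀ x, ⟪dirDeriv v (fun y => ⟪v, y⟫ • w y) x, w x⟫ =
      ⟪w x, ⟪v, x⟫ • dirDeriv v w x⟫ + ‖v‖ ^ 2 * ‖w x‖ ^ 2 := fun x => by
    rw [dirDeriv_smul (hφ.differentiable one_ne_zero x) (hw.differentiable one_ne_zero x),
      dirDeriv_inner, inner_add_left, real_inner_smul_left (w x) (w x), real_inner_comm,
      real_inner_self_eq_norm_sq, real_inner_self_eq_norm_sq]
  simp only [hprod] at hibp
  rw [integral_add hwD (hw_sq.const_mul _), integral_const_mul] at hibp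
  simp only [real_inner_smul_left, real_inner_smul_right, mul_assoc, integral_const_mul] at hibp ⊢
  linarith

lemma norm_pow_four_mul_integral_norm_sq_le (hw : ContDiff ℝ 1 w) (hws : HasCompactSupport w)
    (hd : ∀ x ∈ tsupport w, |⟪v, x⟫| ≤ d) :
    ‖v‖ ^ 4 * ∫ x, ‖w x‖ ^ 2 ∂μ ≤ (2 * d) ^ 2 * ∫ x, ‖dirDeriv v w x‖ ^ 2 ∂μ := by
  have hD : Continuous (dirDeriv v w) := continuous_dirDeriv hw v
  have hDs : HasCompactSupport (dirDeriv v w) := hasCompactSupport_dirDeriv hws v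
  have hφD : MemLp (fun x => (2 * ⟪v, x⟫) • dirDeriv v w x) 2 μ :=
    ((by fun_prop : Continuous fun x => 2 * ⟪v, x⟫).smul hD).memLp_of_hasCompactSupport
      hDs.smul_left
  have hw2 : MemLp (fun x => ‖v‖ ^ 2 • w x) 2 μ :=
    (hw.continuous.memLp_of_hasCompactSupport hws).const_smul _
  have hnorm : ∫ x, ‖‖v‖ ^ 2 • w x‖ ^ 2 ∂μ = ‖v‖ ^ 4 * ∫ x, ‖w x‖ ^ 2 ∂μ := by
    simp only [norm_smul, norm_pow, norm_norm, mul_pow, integral_const_mul, ← pow_mul]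
  have hbound : ∀ x, ‖(2 * ⟪v, x⟫) • dirDeriv v w x‖ ^ 2 ≤
      (2 * d) ^ 2 * ‖dirDeriv v w x‖ ^ 2 := fun x => by
    by_cases hx : x ∈ tsupport w
    · rw [norm_smul, mul_pow, Real.norm_eq_abs, abs_mul, abs_two]
      gcongr
      exact hd x hx
    · have hDx : dirDeriv v w x = 0 := by
        rw [dirDeriv, fderiv_of_notMem_tsupport ℝ hx, zero_apply]
      simp only [hDx, smul_zero, norm_zero, ne_eq, two_ne_zero, not_false_eq_true, zero_pow,
        mul_zero, le_refl]
  calc ‖v‖ ^ 4 * ∫ x, ‖w x‖ ^ 2 ∂μ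
      ≤ ∫ x, ‖(2 * ⟪v, x⟫) • dirDeriv v w x‖ ^ 2 ∂μ := by
        rw [← hnorm]
        refine integral_norm_sq_le_of_le_abs_integral_inner hw2 hφD ?_
        refine (le_of_eq ?_).trans (neg_le_abs _)
        simp only [real_inner_smul_left, integral_const_mul, ← mul_neg,
          ← norm_sq_mul_integral_norm_sq_eq hw hws, hnorm]
        ring
    _ ≤ (2 * d) ^ 2 * ∫ x, ‖dirDeriv v w x‖ ^ 2 ∂μ := by
        rw [← integral_const_mul]
        exact integral_mono hφD.norm.integrable_sq
          ((hD.memLp_of_hasCompactSupport hDs).norm.integrable_sq.const_mul _) hbound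

lemma integral_inner_dirDeriv_conjugated_laplacian (hw : ContDiff ℝ 2 w)
    (hws : HasCompactSupport w) (v : E) (c : ℝ) :
    ∫ x, ⟪dirDeriv v w x, Δ w x - (2 : ℝ) • dirDeriv v w x + c • w x⟫ ∂μ =
      -2 * ∫ x, ‖dirDeriv v w x‖ ^ 2 ∂μ := by
  have hw1 : ContDiff ℝ 1 w := hw.of_le one_le_two
  have hD : Continuous (dirDeriv v w) := continuous_dirDeriv hw1 v
  have hDs : HasCompactSupport (dirDeriv v w) := hasCompactSupport_dirDeriv hws v
  have hΔ : Integrable (fun x => ⟪dirDeriv v w x, Δ w x⟫) μ :=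
    integrable_inner_of_hasCompactSupport_right hD (continuous_laplacian hw)
      (hasCompactSupport_laplacian hws)
  have hDD : Integrable (fun x => ‖dirDeriv v w x‖ ^ 2) μ :=
    (hD.memLp_of_hasCompactSupport hDs).norm.integrable_sq
  have hDw : Integrable (fun x => ⟪dirDeriv v w x, w x⟫) μ :=
    integrable_inner_of_hasCompactSupport_right hD hw.continuous hws
  have hΔD : Integrable (fun x => ⟪dirDeriv v w x, Δ w x⟫ - 2 * ‖dirDeriv v w x‖ ^ 2) μ :=
    hΔ.sub (hDD.const_mul 2)
  simp only [inner_add_right, inner_sub_right, real_inner_smul_right, real_inner_self_eq_norm_sq]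
  rw [integral_add hΔD (hDw.const_mul c),
    integral_sub hΔ (hDD.const_mul 2), integral_const_mul, integral_const_mul,
    integral_inner_dirDeriv_laplacian_eq_zero hw hws,
    integral_inner_dirDeriv_self_eq_zero hw1 hws]
  ring

lemma four_mul_integral_norm_dirDeriv_sq_le (hw : ContDiff ℝ 2 w) (hws : HasCompactSupport w)
    (v : E) (c : ℝ) :
    4 * ∫ x, ‖dirDeriv v w x‖ ^ 2 ∂μ ≤
      ∫ x, ‖Δ w x - (2 : ℝ) • dirDeriv v w x + c • w x‖ ^ 2 ∂μ := by
  have hD : MemLp (fun x => (2 : ℝ) • dirDeriv v w x) 2 μ :=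
    ((continuous_dirDeriv (hw.of_le one_le_two) v).memLp_of_hasCompactSupport
      (hasCompactSupport_dirDeriv hws v)).const_smul 2
  have hΔ : MemLp (Δ w) 2 μ :=
    (continuous_laplacian hw).memLp_of_hasCompactSupport (hasCompactSupport_laplacian hws)
  have hcw : MemLp (fun x => c • w x) 2 μ :=
    (hw.continuous.memLp_of_hasCompactSupport hws).const_smul c
  have hnorm : ∫ x, ‖(2 : ℝ) • dirDeriv v w x‖ ^ 2 ∂μ = 4 * ∫ x, ‖dirDeriv v w x‖ ^ 2 ∂μ := by
    simp only [norm_smul, mul_pow, integral_const_mul, Real.norm_ofNat]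
    norm_num
  rw [← hnorm]
  refine integral_norm_sq_le_of_le_abs_integral_inner hD ((hΔ.sub hD).add hcw) ?_
  refine (le_of_eq ?_).trans (neg_le_abs _)
  simp only [real_inner_smul_left, integral_const_mul,
    integral_inner_dirDeriv_conjugated_laplacian hw hws, hnorm]
  ring

lemma carleman_estimate (hu : ContDiff ℝ 2 u) (hus : HasCompactSupport u)
    (hd : ∀ x ∈ tsupport u, |⟪v, x⟫| ≤ d) :
    ‖v‖ ^ 4 * ∫ x, ‖Real.exp ⟪v, x⟫ • u x‖ ^ 2 ∂μ ≤
      d ^ 2 * ∫ x, ‖Real.exp ⟪v, x⟫ • Δ u x‖ ^ 2 ∂μ := by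
  obtain ⟨w, hw_eq⟩ : ∃ w : E → F, w = fun x => Real.exp ⟪v, x⟫ • u x := ⟨_, rfl⟩
  have hw : ContDiff ℝ 2 w := hw_eq ▸ (innerSL ℝ v).contDiff.exp.smul hu
  have hws : HasCompactSupport w := hw_eq ▸ hus.smul_left
  have hdw : ∀ x ∈ tsupport w, |⟪v, x⟫| ≤ d := fun x hx =>
    hd x (tsupport_smul_subset_right (fun y => Real.exp ⟪v, y⟫) u (hw_eq ▸ hx))
  simp only [exp_inner_smul_laplacian hu hw_eq, ← congrFun hw_eq]
  calc ‖v‖ ^ 4 * ∫ x, ‖w x‖ ^ 2 ∂μ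
      ≤ (2 * d) ^ 2 * ∫ x, ‖dirDeriv v w x‖ ^ 2 ∂μ :=
        norm_pow_four_mul_integral_norm_sq_le (hw.of_le one_le_two) hws hdw
    _ = d ^ 2 * (4 * ∫ x, ‖dirDeriv v w x‖ ^ 2 ∂μ) := by ring
    _ ≤ d ^ 2 * ∫ x, ‖Δ w x - (2 : ℝ) • dirDeriv v w x + ‖v‖ ^ 2 • w x‖ ^ 2 ∂μ := by
        gcongr
        exact four_mul_integral_norm_dirDeriv_sq_le hw hws v (‖v‖ ^ 2)

lemma integral_norm_exp_inner_smul_laplacian_sq_le (hu : ContDiff ℝ 2 u)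
    (hus : HasCompactSupport u) {M : ℝ} (hM : ∀ x, ‖Δ u x‖ ≤ M * ‖u x‖) (v : E) :
    ∫ x, ‖Real.exp ⟪v, x⟫ • Δ u x‖ ^ 2 ∂μ ≤
      M ^ 2 * ∫ x, ‖Real.exp ⟪v, x⟫ • u x‖ ^ 2 ∂μ := by
  have hexp : Continuous fun x => Real.exp ⟪v, x⟫ := by fun_prop
  rw [← integral_const_mul]
  refine integral_mono ?_ ?_ fun x => ?_
  · exact ((hexp.smul (continuous_laplacian hu)).memLp_of_hasCompactSupport
      (hasCompactSupport_laplacian hus).smul_left).norm.integrable_sq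
  · exact ((hexp.smul hu.continuous).memLp_of_hasCompactSupport
      hus.smul_left).norm.integrable_sq.const_mul _
  · change ‖Real.exp ⟪v, x⟫ • Δ u x‖ ^ 2 ≤ M ^ 2 * ‖Real.exp ⟪v, x⟫ • u x‖ ^ 2
    rw [norm_smul, norm_smul, ← mul_pow, mul_left_comm]
    gcongr
    exact hM x

end Estimates

section UniqueContinuation

variable {E F : Type*} [NormedAddCommGroup E] [InnerProductSpace ℝ E] [FiniteDimensional ℝ E]
  [Nontrivial E] [NormedAddCommGroup F] [InnerProductSpace ℝ F] {u : E → F}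

lemma eq_zero_of_norm_laplacian_le (hu : ContDiff ℝ 2 u) (hus : HasCompactSupport u) {M : ℝ}
    (hM : ∀ x, ‖Δ u x‖ ≤ M * ‖u x‖) : u = 0 := by
  borelize E
  obtain ⟨R, hR⟩ := hus.isCompact.exists_bound_of_continuousOn continuousOn_id
  obtain ⟨v, hv⟩ := NormedSpace.exists_lt_norm ℝ E |R * M|
  have hd : ∀ x ∈ tsupport u, |⟪v, x⟫| ≤ ‖v‖ * R := fun x hx =>
    (abs_real_inner_le_norm v x).trans (by gcongr; exact hR x hx)
  by_contra hne
  obtain ⟨x₀, hx₀⟩ := Function.ne_iff.1 hne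
  set I := ∫ x, ‖Real.exp ⟪v, x⟫ • u x‖ ^ 2
  have hI : 0 < I := by
    have hw : Continuous fun x => Real.exp ⟪v, x⟫ • u x :=
      (innerSL ℝ v).continuous.rexp.smul hu.continuous
    refine (hw.norm.pow 2).integral_pos_of_hasCompactSupport_nonneg_nonzero (x := x₀)
      ((hus.smul_left.norm).comp_left (g := (· ^ 2)) (zero_pow two_ne_zero))
      (fun x => sq_nonneg _) ?_
    simpa using hx₀
  have hv_sq : (R * M) ^ 2 < ‖v‖ ^ 2 := sq_lt_sq.2 (by rwa [abs_norm])
  have hv_pos : 0 < ‖v‖ := (abs_nonneg _).trans_lt hv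
  have hlt : ‖v‖ ^ 4 * I < ‖v‖ ^ 4 * I := calc
    ‖v‖ ^ 4 * I ≤ (‖v‖ * R) ^ 2 * ∫ x, ‖Real.exp ⟪v, x⟫ • Δ u x‖ ^ 2 := carleman_estimate hu hus hd
    _ ≤ (‖v‖ * R) ^ 2 * (M ^ 2 * I) := by
      gcongr
      exact integral_norm_exp_inner_smul_laplacian_sq_le hu hus hM v
    _ = ‖v‖ ^ 2 * (R * M) ^ 2 * I := by ring
    _ < ‖v‖ ^ 2 * ‖v‖ ^ 2 * I := by gcongr
    _ = ‖v‖ ^ 4 * I := by ring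
  exact hlt.false

end UniqueContinuation

end CarlemanEstimate

open CarlemanEstimate

lemma euclideanLaplacian_eq_laplacian {n : ℕ} {u : EuclideanSpace ℝ (Fin n) → ℝ}
    (hu : ContDiff ℝ 2 u) (x : EuclideanSpace ℝ (Fin n)) : euclideanLaplacian u x = Δ u x := by
  simp only [laplacian_eq_sum_dirDeriv (EuclideanSpace.basisFun (Fin n) ℝ) hu,
    EuclideanSpace.basisFun_apply]
  rfl

theorem homogeneous_equation_only_zero_solution_general {E F : Type*} [NormedAddCommGroup E]
    [InnerProductSpace ℝ E] [FiniteDimensional ℝ E] [Nontrivial E] [NormedAddCommGroup F]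
    [InnerProductSpace ℝ F] {f : E → ℝ} (hf : Continuous f) {ζ : E → F} (hζ : ContDiff ℝ 2 ζ)
    (hζsupp : HasCompactSupport ζ) (hle : ∀ x, ‖Δ ζ x‖ ≤ f x * ‖ζ x‖) : ζ = 0 := by
  obtain ⟨M, hM⟩ := hζsupp.isCompact.exists_bound_of_continuousOn hf.continuousOn
  refine eq_zero_of_norm_laplacian_le hζ hζsupp (M := M) fun x => (hle x).trans ?_
  by_cases hx : x ∈ tsupport ζ
  · gcongr
    exact (le_abs_self _).trans (hM x hx)
  · rw [image_eq_zero_of_notMem_tsupport hx, norm_zero, mul_zero, mul_zero]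

/-- Given the Sobolev inequality with constant `c_S > 0` on `ℝⁿ`, `n ≥ 3`,
and a continuous `f` whose negative part satisfies `(∫ |f₋|^{n/2})^{2/n} ≤ c_S/2`, every
smooth compactly supported solution `ζ` of `Δζ - fζ = 0` on `ℝⁿ` is identically zero. -/
theorem homogeneous_equation_only_zero_solution {n : ℕ} (hn : 3 ≤ n)
    (c_S : ℝ) (hc : 0 < c_S)
    (hSob : ∀ φ : EuclideanSpace ℝ (Fin n) → ℝ, ContDiff ℝ (⊤ : ℕ∞) φ → HasCompactSupport φ →
      c_S * (∫ x, |φ x| ^ ((2 * (n : ℝ)) / ((n : ℝ) - 2))) ^ (((n : ℝ) - 2) / (n : ℝ))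
        ≤ ∫ x, ‖gradient φ x‖ ^ 2)
    {f : EuclideanSpace ℝ (Fin n) → ℝ} (hf : Continuous f)
    (hfneg : (∫ x, (max (-f x) 0) ^ ((n : ℝ) / 2)) ^ ((2 : ℝ) / (n : ℝ)) ≤ c_S / 2)
    {ζ : EuclideanSpace ℝ (Fin n) → ℝ} (hζ : ContDiff ℝ (⊤ : ℕ∞) ζ)
    (hζsupp : HasCompactSupport ζ)
    (heq : ∀ x : EuclideanSpace ℝ (Fin n), euclideanLaplacian ζ x - f x * ζ x = 0) :
    ζ = 0 := by
  have : NeZero n := ⟨by omega⟩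
  have hζ2 : ContDiff ℝ 2 ζ := hζ.of_le (WithTop.coe_le_coe.2 le_top)
  refine homogeneous_equation_only_zero_solution_general hf.abs hζ2 hζsupp fun x => ?_
  rw [← euclideanLaplacian_eq_laplacian hζ2, sub_eq_zero.1 (heq x), norm_mul,
    Real.norm_eq_abs (f x)]
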